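/- Let N ≥ 5 be an integer, Ω ⊂ ℝ^N a nonempty bounded open set, x₀ ∈ Ω, and a, b : ℝ^N → ℝ continuous functions positive on the closure of Ω with a(x₀) = b(x₀) = γ₀ and γ₀ = min_{x∈Ω̄} a(x) = min_{x∈Ω̄} b(x). Suppose a admits the expansion of order k at x₀ with coefficient A_k > 0 and b admits the expansion of order l at x₀ with coefficient B_l > 0, where k = 2 and l > 2. Set m_N := N(N−2)(N+2)/(8(N−1)). Then for every λ > m_N A₂ there exist smooth functions u, v compactly supported in Ω with ‖u‖_{L^q(Ω)} = ‖v‖_{L^q(Ω)} = 1 such that F_λ(u,v) < γ₀ S. -/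

import Mathlib

open MeasureTheory Real Filter Topology

noncomputable section

/-!
Test with `u = v` equal to the bubble `(1 + |y|²)^(-(N-2)/2)` concentrated at `x₀` at scale `δ`,
made compactly supported by subtracting (smoothly) its height `c = O(δ^(N-2))` on a small sphere
around `x₀`. This truncation does not increase gradients and lowers the `L^q` norm by a relative
error `O(c)`, which is `o(δ²)` because `N ≥ 5`. With `I = ∫ (1 + |y|²)^(-(N-2))` and
`J = ∫ |y|⁴ (1 + |y|²)^(-N)`, the energy of the normalized function is at most
`γ₀ S + (δ² / K₂) (A₂ (N-2)² J / 2 - λ I) + o(δ²)`; the term of `b` drops out because `l > 2`.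
Integrating by parts twice in the radial variable gives `(N-2)² J / 2 = m_N I`, so the coefficient
of `δ²` is negative exactly when `λ > m_N A₂`.
-/

/-- A smooth substitute for the positive part `max s 0` whose slopes stay at most `1`. -/
def smoothPosPart (s : ℝ) : ℝ := s * expNegInvGlue s

lemma smoothPosPart_of_nonpos {s : ℝ} (hs : s ≤ 0) : smoothPosPart s = 0 := by
  rw [smoothPosPart, expNegInvGlue.zero_of_nonpos hs, mul_zero]

lemma smoothPosPart_of_pos {s : ℝ} (hs : 0 < s) : smoothPosPart s = s * exp (-s⁻¹) := by
  rw [smoothPosPart, expNegInvGlue, if_neg hs.not_ge]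

lemma smoothPosPart_nonneg (s : ℝ) : 0 ≤ smoothPosPart s := by
  rcases le_or_gt s 0 with hs | hs
  · exact (smoothPosPart_of_nonpos hs).ge
  · exact mul_nonneg hs.le (expNegInvGlue.nonneg s)

lemma smoothPosPart_le_max (s : ℝ) : smoothPosPart s ≤ max s 0 := by
  rcases le_or_gt s 0 with hs | hs
  · exact (smoothPosPart_of_nonpos hs).trans_le (le_max_right _ _)
  · rw [smoothPosPart_of_pos hs, max_eq_left hs.le]
    exact mul_le_of_le_one_right hs.le (exp_le_one_iff.2 (neg_nonpos.2 (inv_pos.2 hs).le))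

lemma sub_one_le_smoothPosPart (s : ℝ) : s - 1 ≤ smoothPosPart s := by
  rcases le_or_gt s 0 with hs | hs
  · rw [smoothPosPart_of_nonpos hs]
    linarith
  · calc s - 1 = s * (-s⁻¹ + 1) := by field_simp; ring
      _ ≤ s * exp (-s⁻¹) := by gcongr; exact add_one_le_exp _
      _ = smoothPosPart s := (smoothPosPart_of_pos hs).symm

lemma contDiff_smoothPosPart : ContDiff ℝ (⊤ : ℕ∞) smoothPosPart :=
  contDiff_id.mul expNegInvGlue.contDiff

lemma hasDerivAt_smoothPosPart_of_pos {s : ℝ} (hs : 0 < s) :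
    HasDerivAt smoothPosPart (exp (-s⁻¹) * (1 + s⁻¹)) s := by
  have hformula : HasDerivAt (fun s => s * exp (-s⁻¹))
      (1 * exp (-s⁻¹) + s * (exp (-s⁻¹) * -(-(s ^ 2)⁻¹))) s :=
    (hasDerivAt_id s).mul (hasDerivAt_inv hs.ne').neg.exp
  have heq : smoothPosPart =ᶠ[𝓝 s] fun s => s * exp (-s⁻¹) := by
    filter_upwards [Ioi_mem_nhds hs] with t ht using smoothPosPart_of_pos ht
  exact (hformula.congr_of_eventuallyEq heq).congr_deriv (by field_simp)

lemma abs_deriv_smoothPosPart_le_one (s : ℝ) : |deriv smoothPosPart s| ≤ 1 := by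
  rcases le_or_gt s 0 with hs | hs
  · have hmin : IsLocalMin smoothPosPart s := Eventually.of_forall fun t => by
      rw [smoothPosPart_of_nonpos hs]
      exact smoothPosPart_nonneg t
    rw [hmin.deriv_eq_zero, abs_zero]
    exact zero_le_one
  · rw [(hasDerivAt_smoothPosPart_of_pos hs).deriv, abs_of_nonneg (by positivity)]
    calc exp (-s⁻¹) * (1 + s⁻¹) ≤ exp (-s⁻¹) * exp s⁻¹ := by
          gcongr
          linarith [add_one_le_exp s⁻¹]
      _ = 1 := by rw [← exp_add, neg_add_cancel, exp_zero]

/-- Smooth soft thresholding at level `c`: it annihilates the values up to `c`, lowers the others by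
at most `2 * c`, and does not increase slopes. Truncating a function this way, rather than by
multiplying it with a cut-off, creates no gradient error terms. -/
def softThreshold (c t : ℝ) : ℝ := c * smoothPosPart (t / c - 1)

section SoftThreshold

variable {c t : ℝ}

lemma contDiff_softThreshold (c : ℝ) : ContDiff ℝ (⊤ : ℕ∞) (softThreshold c) :=
  contDiff_const.mul (contDiff_smoothPosPart.comp (by fun_prop))

lemma abs_deriv_softThreshold_le_one (c t : ℝ) : |deriv (softThreshold c) t| ≤ 1 := by
  have hinner : HasDerivAt (fun t : ℝ => t / c - 1) (1 / c) t :=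
    ((hasDerivAt_id t).div_const c).sub_const 1
  have hψ := (contDiff_smoothPosPart.differentiable (by simp) (t / c - 1)).hasDerivAt
  have hderiv : HasDerivAt (softThreshold c) (c / c * deriv smoothPosPart (t / c - 1)) t :=
    ((HasDerivAt.comp (h₂ := smoothPosPart) t hψ hinner).const_mul c).congr_deriv (by ring)
  rw [hderiv.deriv, abs_mul]
  exact mul_le_one₀ (by rw [abs_div]; exact div_self_le_one _) (abs_nonneg _)
    (abs_deriv_smoothPosPart_le_one _)

lemma softThreshold_nonneg (hc : 0 < c) (t : ℝ) : 0 ≤ softThreshold c t :=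
  mul_nonneg hc.le (smoothPosPart_nonneg _)

lemma softThreshold_of_le (hc : 0 < c) (ht : t ≤ c) : softThreshold c t = 0 := by
  rw [softThreshold, smoothPosPart_of_nonpos (sub_nonpos.2 ((div_le_one hc).2 ht)), mul_zero]

lemma softThreshold_le_self (hc : 0 < c) (ht : 0 ≤ t) : softThreshold c t ≤ t := by
  have hmax : max (t / c - 1) 0 ≤ t / c := max_le (by linarith) (by positivity)
  calc softThreshold c t ≤ c * (t / c) := by
        unfold softThreshold
        gcongr
        exact (smoothPosPart_le_max _).trans hmax
    _ = t := mul_div_cancel₀ t hc.ne'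

lemma sub_two_mul_le_softThreshold (hc : 0 < c) (t : ℝ) : t - 2 * c ≤ softThreshold c t := by
  calc t - 2 * c = c * (t / c - 1 - 1) := by field_simp; ring
    _ ≤ softThreshold c t := by
        unfold softThreshold
        gcongr
        exact sub_one_le_smoothPosPart _

lemma tendsto_softThreshold_nhdsGT_zero (ht : 0 ≤ t) :
    Tendsto (fun c => softThreshold c t) (𝓝[>] 0) (𝓝 t) := by
  have hlower : Tendsto (fun c : ℝ => t - 2 * c) (𝓝[>] 0) (𝓝 t) := by
    simpa using ((by fun_prop : Continuous fun c : ℝ => t - 2 * c).tendsto 0).mono_left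
      nhdsWithin_le_nhds
  refine tendsto_of_tendsto_of_tendsto_of_le_of_le' hlower tendsto_const_nhds ?_ ?_
  · filter_upwards [self_mem_nhdsWithin] with c hc using sub_two_mul_le_softThreshold hc t
  · filter_upwards [self_mem_nhdsWithin] with c hc using softThreshold_le_self hc ht

lemma rpow_add_mul_sub_le_rpow {t w q : ℝ} (ht : 0 < t) (hw : 0 ≤ w) (hq : 1 ≤ q) :
    t ^ q + q * t ^ (q - 1) * (w - t) ≤ w ^ q := by
  have hbernoulli : 1 + q * (w / t - 1) ≤ (w / t) ^ q := by
    simpa using one_add_mul_self_le_rpow_one_add (s := w / t - 1)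
      (by linarith [div_nonneg hw ht.le]) hq
  have hpow : t ^ q = t ^ (q - 1) * t := by rw [← rpow_add_one ht.ne', sub_add_cancel]
  calc t ^ q + q * t ^ (q - 1) * (w - t) = t ^ q * (1 + q * (w / t - 1)) := by
        rw [hpow]; field_simp
    _ ≤ t ^ q * (w / t) ^ q := by gcongr
    _ = w ^ q := by rw [← mul_rpow ht.le (by positivity), mul_div_cancel₀ w ht.ne']

lemma rpow_sub_le_softThreshold_rpow {q : ℝ} (hc : 0 < c) (ht : 0 < t) (hq : 1 ≤ q) :
    t ^ q - 2 * q * c * t ^ (q - 1) ≤ softThreshold c t ^ q := by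
  calc t ^ q - 2 * q * c * t ^ (q - 1) = t ^ q + q * t ^ (q - 1) * (t - 2 * c - t) := by ring
    _ ≤ t ^ q + q * t ^ (q - 1) * (softThreshold c t - t) := by
        gcongr
        exact sub_two_mul_le_softThreshold hc t
    _ ≤ softThreshold c t ^ q := rpow_add_mul_sub_le_rpow ht (softThreshold_nonneg hc t) hq

end SoftThreshold

/-- The profile `(1 + |y|²)^(-s)`. In dimension `n`, the Aubin–Talenti bubble, which is extremal for
the Sobolev inequality, is the case `s = (n - 2) / 2`. -/
def bubble {E : Type*} [NormedAddCommGroup E] (s : ℝ) (y : E) : ℝ := (1 + ‖y‖ ^ 2) ^ (-s)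

section Bubble

variable {E : Type*} [NormedAddCommGroup E]

lemma bubble_pos (s : ℝ) (y : E) : 0 < bubble s y := by
  unfold bubble
  positivity

lemma bubble_rpow (s p : ℝ) (y : E) : bubble s y ^ p = bubble (s * p) y := by
  rw [bubble, ← rpow_mul (by positivity), neg_mul, bubble]

lemma bubble_sq (s : ℝ) (y : E) : bubble s y ^ 2 = bubble (2 * s) y := by
  rw [← rpow_two, bubble_rpow, mul_comm]

lemma continuous_bubble (s : ℝ) : Continuous (bubble s : E → ℝ) :=
  Continuous.rpow_const (by fun_prop) fun y => Or.inl (by positivity)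

lemma continuous_softThreshold_bubble (s c : ℝ) :
    Continuous fun y : E => softThreshold c (bubble s y) :=
  (contDiff_softThreshold c).continuous.comp (continuous_bubble s)

lemma norm_pow_mul_bubble_le (p : ℕ) (s : ℝ) (y : E) :
    ‖y‖ ^ p * bubble s y ≤ bubble (s - p / 2) y := by
  have hnorm : ‖y‖ ^ p ≤ (1 + ‖y‖ ^ 2) ^ ((p : ℝ) / 2) := by
    rw [div_eq_inv_mul, rpow_mul (by positivity), rpow_natCast]
    gcongr
    rw [← one_div, ← sqrt_eq_rpow]
    exact le_sqrt_of_sq_le (by linarith)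
  calc ‖y‖ ^ p * bubble s y ≤ (1 + ‖y‖ ^ 2) ^ ((p : ℝ) / 2) * (1 + ‖y‖ ^ 2) ^ (-s) := by
        unfold bubble
        gcongr
    _ = bubble (s - p / 2) y := by
        rw [← rpow_add (by positivity), bubble, neg_sub, sub_eq_add_neg]

end Bubble

/-- The integral of `|y|^p (1 + |y|²)^(-s)`. The constants of the theorem are
`K₁ = (N - 2)² * radialMoment volume 2 N` and `K₂ = radialMoment volume 0 N ^ ((N - 2) / N)`. -/
def radialMoment {E : Type*} [NormedAddCommGroup E] [MeasurableSpace E] (μ : Measure E) (p : ℕ)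
    (s : ℝ) : ℝ :=
  ∫ y, ‖y‖ ^ p * bubble s y ∂μ

section RadialMoment

variable {E : Type*} [NormedAddCommGroup E] [MeasurableSpace E] (μ : Measure E)

lemma radialMoment_nonneg (p : ℕ) (s : ℝ) : 0 ≤ radialMoment μ p s :=
  integral_nonneg fun y => mul_nonneg (by positivity) (bubble_pos s y).le

lemma radialMoment_zero (s : ℝ) : radialMoment μ 0 s = ∫ y, bubble s y ∂μ := by
  simp only [radialMoment, pow_zero, one_mul]

variable [NormedSpace ℝ E] [FiniteDimensional ℝ E] [BorelSpace E] [μ.IsAddHaarMeasure]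

lemma integrable_bubble {s : ℝ} (hs : (Module.finrank ℝ E : ℝ) < 2 * s) :
    Integrable (bubble s : E → ℝ) μ := by
  refine (integrable_rpow_neg_one_add_norm_sq (μ := μ) hs).congr (ae_of_all _ fun y => ?_)
  simp only [bubble, neg_div, mul_div_cancel_left₀ s two_ne_zero]

lemma integrable_norm_pow_mul_bubble {p : ℕ} {s : ℝ} (hs : (Module.finrank ℝ E : ℝ) + p < 2 * s) :
    Integrable (fun y : E => ‖y‖ ^ p * bubble s y) μ := by
  refine (integrable_bubble μ (s := s - p / 2) (by linarith)).mono'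
    (Continuous.aestronglyMeasurable (by have := continuous_bubble (E := E) s; fun_prop))
    (ae_of_all _ fun y => ?_)
  rw [norm_of_nonneg (mul_nonneg (by positivity) (bubble_pos s y).le)]
  exact norm_pow_mul_bubble_le p s y

lemma radialMoment_zero_pos {s : ℝ} (hs : (Module.finrank ℝ E : ℝ) < 2 * s) :
    0 < radialMoment μ 0 s := by
  rw [radialMoment_zero]
  exact integral_pos_of_integrable_nonneg_nonzero (x := 0) (continuous_bubble s)
    (integrable_bubble μ hs) (fun y => (bubble_pos s y).le) (bubble_pos s 0).ne'

lemma integrableOn_Ioi_pow_mul_rpow {p : ℕ} {s : ℝ} (hs : (p : ℝ) + 1 < 2 * s) :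
    IntegrableOn (fun r : ℝ => r ^ p * (1 + r ^ 2) ^ (-s)) (Set.Ioi 0) := by
  have hintg : Integrable (fun r : ℝ => ‖r‖ ^ p * bubble s r) :=
    integrable_norm_pow_mul_bubble volume (by rw [Module.finrank_self]; push_cast; linarith)
  refine hintg.integrableOn.congr_fun (fun r (hr : 0 < r) => ?_) measurableSet_Ioi
  simp only [bubble, norm_of_nonneg hr.le]

lemma tendsto_pow_succ_mul_rpow_atTop {p : ℕ} {s : ℝ} (hs : (p : ℝ) + 1 < 2 * s) :
    Tendsto (fun r : ℝ => r ^ (p + 1) * (1 + r ^ 2) ^ (-s)) atTop (𝓝 0) := by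
  refine squeeze_zero' (eventually_ge_atTop 0 |>.mono fun r hr => by positivity) ?_
    (tendsto_rpow_neg_atTop (y := 2 * s - (p + 1)) (by linarith))
  filter_upwards [eventually_gt_atTop 0] with r hr
  calc r ^ (p + 1) * (1 + r ^ 2) ^ (-s) ≤ r ^ (p + 1) * (r ^ 2) ^ (-s) := by
        gcongr ?_ * ?_
        exact rpow_le_rpow_of_nonpos (by positivity) (by linarith)
          (by linarith [p.cast_nonneg (α := ℝ)])
    _ = r ^ (-(2 * s - (p + 1))) := by
        rw [← rpow_two, ← rpow_mul hr.le, ← rpow_natCast, ← rpow_add hr]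
        push_cast
        congr 1
        ring

lemma add_one_mul_integral_Ioi_pow_mul_rpow {p : ℕ} {s : ℝ} (hs : (p : ℝ) + 1 < 2 * s) :
    ((p : ℝ) + 1) * ∫ r in Set.Ioi (0 : ℝ), r ^ p * (1 + r ^ 2) ^ (-s) =
      2 * s * ∫ r in Set.Ioi (0 : ℝ), r ^ (p + 2) * (1 + r ^ 2) ^ (-(s + 1)) := by
  have hintg := integrableOn_Ioi_pow_mul_rpow hs
  have hintg' := integrableOn_Ioi_pow_mul_rpow (p := p + 2) (s := s + 1) (by push_cast; linarith)
  have hderiv : ∀ r ∈ Set.Ioi (0 : ℝ), HasDerivAt (fun r : ℝ => r ^ (p + 1) * (1 + r ^ 2) ^ (-s))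
      (((p : ℝ) + 1) * (r ^ p * (1 + r ^ 2) ^ (-s)) -
        2 * s * (r ^ (p + 2) * (1 + r ^ 2) ^ (-(s + 1)))) r := fun r _ => by
    have hbase : HasDerivAt (fun r : ℝ => 1 + r ^ 2) (2 * r) r := by
      simpa using (hasDerivAt_pow 2 r).const_add 1
    refine ((hasDerivAt_pow (p + 1) r).mul
      (hbase.rpow_const (p := -s) (Or.inl (by positivity)))).congr_deriv ?_
    rw [show -s - 1 = -(s + 1) by ring]
    push_cast [Nat.add_sub_cancel]
    ring
  have hcont : Continuous fun r : ℝ => r ^ (p + 1) * (1 + r ^ 2) ^ (-s) :=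
    Continuous.mul (by fun_prop)
      (Continuous.rpow_const (by fun_prop) fun r => Or.inl (by positivity))
  have hFTC := integral_Ioi_of_hasDerivAt_of_tendsto hcont.continuousWithinAt hderiv
    ((hintg.const_mul _).sub (hintg'.const_mul _)) (tendsto_pow_succ_mul_rpow_atTop hs)
  rw [integral_sub (hintg.const_mul _) (hintg'.const_mul _), integral_const_mul,
    integral_const_mul, zero_pow p.succ_ne_zero, zero_mul, sub_zero] at hFTC
  exact sub_eq_zero.1 hFTC

lemma radialMoment_eq_integral_Ioi [Nontrivial E] (p : ℕ) (s : ℝ) :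
    radialMoment μ p s = Module.finrank ℝ E * μ.real (Metric.ball 0 1) *
      ∫ r in Set.Ioi (0 : ℝ), r ^ (Module.finrank ℝ E - 1 + p) * (1 + r ^ 2) ^ (-s) := by
  refine (integral_fun_norm_addHaar μ fun r : ℝ => r ^ p * (1 + r ^ 2) ^ (-s)).trans ?_
  simp only [smul_eq_mul, nsmul_eq_mul, pow_add, mul_assoc]

lemma finrank_add_mul_radialMoment [Nontrivial E] {p : ℕ} {s : ℝ}
    (hs : (Module.finrank ℝ E : ℝ) + p < 2 * s) :
    ((Module.finrank ℝ E : ℝ) + p) * radialMoment μ p s =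
      2 * s * radialMoment μ (p + 2) (s + 1) := by
  have hcast : ((Module.finrank ℝ E - 1 + p : ℕ) : ℝ) + 1 = Module.finrank ℝ E + p := by
    rw [Nat.cast_add, Nat.cast_pred Module.finrank_pos]
    ring
  have hparts := add_one_mul_integral_Ioi_pow_mul_rpow (hcast.trans_lt hs)
  rw [hcast] at hparts
  rw [radialMoment_eq_integral_Ioi, radialMoment_eq_integral_Ioi, ← add_assoc]
  linear_combination (Module.finrank ℝ E : ℝ) * μ.real (Metric.ball (0 : E) 1) * hparts

-- Integration by parts twice; this identity is the source of the threshold `m_N`.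
lemma radialMoment_zero_eq_radialMoment_four {N : ℕ} (hdim : Module.finrank ℝ E = N) (hN : 5 ≤ N) :
    (N : ℝ) * (N + 2) * radialMoment μ 0 (N - 2) =
      4 * ((N : ℝ) - 1) * (N - 2) * radialMoment μ 4 N := by
  have : Nontrivial E := Module.nontrivial_of_finrank_pos (R := ℝ) (by omega)
  have hN' : (5 : ℝ) ≤ N := by exact_mod_cast hN
  have hfirst := finrank_add_mul_radialMoment μ (p := 0) (s := N - 2)
    (by rw [hdim]; push_cast; linarith)
  have hsecond := finrank_add_mul_radialMoment μ (p := 2) (s := N - 1)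
    (by rw [hdim]; push_cast; linarith)
  rw [hdim, show (N : ℝ) - 2 + 1 = N - 1 by ring] at hfirst
  rw [hdim, sub_add_cancel] at hsecond
  push_cast at hfirst hsecond
  linear_combination ((N : ℝ) + 2) * hfirst + 2 * ((N : ℝ) - 2) * hsecond

end RadialMoment

section InnerProductSpace

variable {E : Type*} [NormedAddCommGroup E] [InnerProductSpace ℝ E]

lemma contDiff_bubble (s : ℝ) : ContDiff ℝ (⊤ : ℕ∞) (bubble s : E → ℝ) :=
  (contDiff_const.add (contDiff_norm_sq ℝ)).rpow_const_of_ne fun y => by positivity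

lemma norm_fderiv_bubble_sq (s : ℝ) (y : E) :
    ‖fderiv ℝ (bubble s) y‖ ^ 2 = 4 * s ^ 2 * (‖y‖ ^ 2 * bubble (2 * (s + 1)) y) := by
  have hbase : HasFDerivAt (fun y : E => 1 + ‖y‖ ^ 2) (2 • innerSL ℝ y) y :=
    (hasStrictFDerivAt_norm_sq y).hasFDerivAt.const_add 1
  have hbubble : HasFDerivAt (bubble s)
      ((-s * (1 + ‖y‖ ^ 2) ^ (-s - 1)) • (2 • innerSL ℝ y)) y :=
    (hasDerivAt_rpow_const (Or.inl (by positivity))).comp_hasFDerivAt y hbase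
  rw [hbubble.fderiv, ← neg_add', ← bubble, norm_smul, ← Nat.cast_smul_eq_nsmul ℝ, norm_smul,
    innerSL_apply_norm, mul_pow, mul_pow, norm_eq_abs, sq_abs, mul_pow, bubble_sq]
  simp only [Nat.cast_ofNat, norm_ofNat, even_two.neg_pow]
  ring

/-- The height at distance `r` of the bubble concentrated at scale `δ`: truncating at this level
confines its support to the ball of radius `r`. -/
def truncationLevel (s r δ : ℝ) : ℝ := (1 + (r / δ) ^ 2) ^ (-s)

lemma truncationLevel_pos (s r δ : ℝ) : 0 < truncationLevel s r δ := by
  unfold truncationLevel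
  positivity

/-- The bubble concentrated at `x₀` at scale `δ`, truncated at level `c`: the test function of the
proof. -/
def truncatedBubble (s c δ : ℝ) (x₀ x : E) : ℝ := softThreshold c (bubble s (δ⁻¹ • (x - x₀)))

variable {s c δ : ℝ} {x₀ : E}

lemma contDiff_truncatedBubble (s c δ : ℝ) (x₀ : E) :
    ContDiff ℝ (⊤ : ℕ∞) (truncatedBubble s c δ x₀) :=
  (contDiff_softThreshold c).comp ((contDiff_bubble s).comp (by fun_prop))

lemma norm_fderiv_truncatedBubble_sq_le (s c δ : ℝ) (x₀ x : E) :
    ‖fderiv ℝ (truncatedBubble s c δ x₀) x‖ ^ 2 ≤ δ⁻¹ ^ 2 *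
      (4 * s ^ 2 * (‖δ⁻¹ • (x - x₀)‖ ^ 2 * bubble (2 * (s + 1)) (δ⁻¹ • (x - x₀)))) := by
  set y := δ⁻¹ • (x - x₀)
  have hthreshold := (contDiff_softThreshold c).differentiable (by simp) (bubble s y)
  have hbubble := (contDiff_bubble s).differentiable (by simp) y
  have hscale : HasFDerivAt (fun x : E => δ⁻¹ • (x - x₀)) (δ⁻¹ • ContinuousLinearMap.id ℝ E) x :=
    ((hasFDerivAt_id x).sub_const x₀).const_smul δ⁻¹
  have hchain : HasFDerivAt (truncatedBubble s c δ x₀)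
      ((deriv (softThreshold c) (bubble s y) • fderiv ℝ (bubble s) y).comp
        (δ⁻¹ • ContinuousLinearMap.id ℝ E)) x :=
    HasFDerivAt.comp (g := softThreshold c ∘ bubble s) x
      (hthreshold.hasDerivAt.comp_hasFDerivAt y hbubble.hasFDerivAt) hscale
  rw [hchain.fderiv, ContinuousLinearMap.comp_smul, ContinuousLinearMap.comp_id, norm_smul,
    norm_smul, mul_pow, mul_pow, norm_eq_abs, sq_abs, ← norm_fderiv_bubble_sq]
  have hslope : ‖deriv (softThreshold c) (bubble s y)‖ ^ 2 ≤ 1 :=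
    pow_le_one₀ (norm_nonneg _) (abs_deriv_softThreshold_le_one _ _)
  gcongr
  exact mul_le_of_le_one_left (by positivity) hslope

lemma tsupport_truncatedBubble_subset_closedBall {r : ℝ} (hs : 0 ≤ s) (hr : 0 ≤ r) (hδ : 0 < δ) :
    tsupport (truncatedBubble s (truncationLevel s r δ) δ x₀) ⊆ Metric.closedBall x₀ r := by
  refine closure_minimal (fun x hx => ?_) Metric.isClosed_closedBall
  by_contra hfar
  refine hx (softThreshold_of_le (truncationLevel_pos s r δ) ?_)
  rw [Metric.mem_closedBall, dist_eq_norm, not_le] at hfar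
  refine rpow_le_rpow_of_nonpos (by positivity) ?_ (neg_nonpos.2 hs)
  rw [norm_smul, norm_of_nonneg (by positivity), ← div_eq_inv_mul]
  gcongr

lemma tendsto_truncationLevel_div_sq {r : ℝ} (hr : 0 < r) (hs : 1 < s) :
    Tendsto (fun δ => truncationLevel s r δ / δ ^ 2) (𝓝[>] 0) (𝓝 0) := by
  have hmajorant : Tendsto (fun δ : ℝ => r ^ (-(2 * s)) * δ ^ (2 * s - 2)) (𝓝[>] 0) (𝓝 0) := by
    have hcont : Continuous fun δ : ℝ => r ^ (-(2 * s)) * δ ^ (2 * s - 2) :=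
      continuous_const.mul (continuous_rpow_const (by linarith))
    simpa [zero_rpow (show 2 * s - 2 ≠ 0 by linarith)] using
      (hcont.tendsto 0).mono_left nhdsWithin_le_nhds
  refine squeeze_zero'
    (Eventually.of_forall fun δ => div_nonneg (truncationLevel_pos s r δ).le (sq_nonneg δ)) ?_
    hmajorant
  filter_upwards [self_mem_nhdsWithin] with δ (hδ : 0 < δ)
  calc truncationLevel s r δ / δ ^ 2 ≤ ((r / δ) ^ 2) ^ (-s) / δ ^ 2 := by
        gcongr ?_ / _
        exact rpow_le_rpow_of_nonpos (by positivity) (by linarith) (by linarith)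
    _ = r ^ (-(2 * s)) * δ ^ (2 * s - 2) := by
        rw [← rpow_two, ← rpow_mul (by positivity), div_rpow hr.le hδ.le, rpow_sub hδ, rpow_two,
          mul_neg, rpow_neg hδ.le]
        field_simp

lemma tendsto_truncationLevel_nhdsGT_zero {r : ℝ} (hr : 0 < r) (hs : 1 < s) :
    Tendsto (truncationLevel s r) (𝓝[>] 0) (𝓝[>] 0) := by
  refine tendsto_nhdsWithin_iff.2 ⟨?_, Eventually.of_forall (truncationLevel_pos s r)⟩
  have hsq : Tendsto (fun δ : ℝ => δ ^ 2) (𝓝[>] 0) (𝓝 0) := by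
    simpa using ((continuous_pow 2).tendsto (0 : ℝ)).mono_left nhdsWithin_le_nhds
  have hmul := (tendsto_truncationLevel_div_sq hr hs).mul hsq
  rw [mul_zero] at hmul
  refine hmul.congr' ?_
  filter_upwards [self_mem_nhdsWithin] with δ (hδ : 0 < δ)
  exact div_mul_cancel₀ _ (by positivity)

end InnerProductSpace

section EnergyMajorant

variable {E : Type*} [NormedAddCommGroup E]

/-- In the rescaled variable `y = (x - x₀) / δ`, a majorant of the energy density of the bubble
for a weight that is at most `γ + α * |x - x₀|²`. -/
def energyMajorant (s γ α δ : ℝ) (y : E) : ℝ :=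
  δ⁻¹ ^ 2 * (4 * s ^ 2) * (γ * (‖y‖ ^ 2 * bubble (2 * (s + 1)) y) +
    α * δ ^ 2 * (‖y‖ ^ 4 * bubble (2 * (s + 1)) y))

lemma energyMajorant_nonneg {γ α : ℝ} (hγ : 0 ≤ γ) (hα : 0 ≤ α) (s δ : ℝ) (y : E) :
    0 ≤ energyMajorant s γ α δ y := by
  have := bubble_pos (2 * (s + 1)) y
  unfold energyMajorant
  positivity

lemma norm_mul_norm_fderiv_truncatedBubble_sq_le [InnerProductSpace ℝ E] {w : E → ℝ}
    {s c δ γ α : ℝ} {x₀ : E} (hγ : 0 ≤ γ) (hα : 0 ≤ α) (hδ : 0 < δ)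
    (hw : ∀ x ∈ tsupport (truncatedBubble s c δ x₀), |w x| ≤ γ + α * ‖x - x₀‖ ^ 2) (x : E) :
    ‖w x * ‖fderiv ℝ (truncatedBubble s c δ x₀) x‖ ^ 2‖ ≤
      energyMajorant s γ α δ (δ⁻¹ • (x - x₀)) := by
  by_cases hx : x ∈ tsupport (truncatedBubble s c δ x₀)
  · have hdist : ‖x - x₀‖ = δ * ‖δ⁻¹ • (x - x₀)‖ := by
      rw [norm_smul, norm_of_nonneg (by positivity), mul_inv_cancel_left₀ hδ.ne']
    rw [norm_mul, norm_of_nonneg (sq_nonneg _)]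
    calc ‖w x‖ * ‖fderiv ℝ (truncatedBubble s c δ x₀) x‖ ^ 2
        ≤ (γ + α * ‖x - x₀‖ ^ 2) * _ :=
          mul_le_mul (hw x hx) (norm_fderiv_truncatedBubble_sq_le s c δ x₀ x) (by positivity)
            (by positivity)
      _ = energyMajorant s γ α δ (δ⁻¹ • (x - x₀)) := by
          rw [hdist, energyMajorant]
          ring
  · have hfderiv : fderiv ℝ (truncatedBubble s c δ x₀) x = 0 :=
      Function.notMem_support.1 fun h => hx (support_fderiv_subset ℝ h)
    rw [hfderiv, norm_zero, zero_pow two_ne_zero, mul_zero, norm_zero]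
    exact energyMajorant_nonneg hγ hα s δ _

end EnergyMajorant

section TruncatedBubbleIntegrals

variable {E : Type*} [NormedAddCommGroup E] [InnerProductSpace ℝ E] [FiniteDimensional ℝ E]
  [MeasurableSpace E] [BorelSpace E] (μ : Measure E) [μ.IsAddHaarMeasure] {s c δ : ℝ} {x₀ : E}

lemma integral_comp_inv_smul_sub (f : E → ℝ) (hδ : 0 ≤ δ) (x₀ : E) :
    ∫ x, f (δ⁻¹ • (x - x₀)) ∂μ = δ ^ Module.finrank ℝ E * ∫ y, f y ∂μ := by
  rw [integral_sub_right_eq_self (fun x => f (δ⁻¹ • x)) x₀,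
    Measure.integral_comp_inv_smul_of_nonneg μ f hδ, smul_eq_mul]

lemma setIntegral_comp_truncatedBubble {g : ℝ → ℝ} (hg : g 0 = 0) (hδ : 0 ≤ δ) {Ω : Set E}
    (hΩ : tsupport (truncatedBubble s c δ x₀) ⊆ Ω) :
    ∫ x in Ω, g (truncatedBubble s c δ x₀ x) ∂μ =
      δ ^ Module.finrank ℝ E * ∫ y, g (softThreshold c (bubble s y)) ∂μ := by
  rw [setIntegral_eq_integral_of_forall_compl_eq_zero fun x hx => ?_]
  · exact integral_comp_inv_smul_sub μ (fun y => g (softThreshold c (bubble s y))) hδ x₀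
  · rw [image_eq_zero_of_notMem_tsupport fun hmem => hx (hΩ hmem), hg]

lemma sub_le_integral_softThreshold_bubble_rpow {q : ℝ} (hc : 0 < c) (hq : 1 ≤ q)
    (hs : (Module.finrank ℝ E : ℝ) < 2 * (s * (q - 1))) :
    radialMoment μ 0 (s * q) - 2 * q * c * radialMoment μ 0 (s * (q - 1)) ≤
      ∫ y, |softThreshold c (bubble s y)| ^ q ∂μ := by
  have hs_pos : 0 < s := by
    have hprod : 0 < s * (q - 1) := by linarith [(Module.finrank ℝ E).cast_nonneg (α := ℝ)]
    exact pos_of_mul_pos_left hprod (sub_nonneg.2 hq)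
  have hintg : Integrable (bubble (s * q) : E → ℝ) μ := integrable_bubble μ (by linarith)
  have hintg' : Integrable (bubble (s * (q - 1)) : E → ℝ) μ := integrable_bubble μ hs
  have hbounds : ∀ y : E, bubble (s * q) y - 2 * q * c * bubble (s * (q - 1)) y ≤
      |softThreshold c (bubble s y)| ^ q ∧
        |softThreshold c (bubble s y)| ^ q ≤ bubble (s * q) y := by
    intro y
    rw [abs_of_nonneg (softThreshold_nonneg hc _), ← bubble_rpow, ← bubble_rpow]
    exact ⟨rpow_sub_le_softThreshold_rpow hc (bubble_pos s y) hq,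
      rpow_le_rpow (softThreshold_nonneg hc _) (softThreshold_le_self hc (bubble_pos s y).le)
        (by linarith)⟩
  rw [radialMoment_zero, radialMoment_zero, ← integral_const_mul,
    ← integral_sub hintg (hintg'.const_mul _)]
  refine integral_mono (hintg.sub (hintg'.const_mul _))
    (hintg.mono' ?_ (ae_of_all _ fun y => ?_)) fun y => (hbounds y).1
  · exact ((continuous_softThreshold_bubble s c).abs.rpow_const fun y =>
      Or.inr (by linarith)).aestronglyMeasurable
  · rw [norm_of_nonneg (by positivity)]
    exact (hbounds y).2

lemma tendsto_integral_softThreshold_bubble_sq (hs : (Module.finrank ℝ E : ℝ) < 2 * (2 * s)) :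
    Tendsto (fun c => ∫ y, softThreshold c (bubble s y) ^ 2 ∂μ) (𝓝[>] 0)
      (𝓝 (radialMoment μ 0 (2 * s))) := by
  rw [radialMoment_zero]
  refine tendsto_integral_filter_of_dominated_convergence (bubble (2 * s))
    (Eventually.of_forall fun c =>
      ((continuous_softThreshold_bubble s c).pow 2).aestronglyMeasurable)
    ?_ (integrable_bubble μ hs) (ae_of_all _ fun y => ?_)
  · filter_upwards [self_mem_nhdsWithin] with c hc
    refine ae_of_all _ fun y => ?_
    rw [norm_of_nonneg (sq_nonneg _), ← bubble_sq]
    exact pow_le_pow_left₀ (softThreshold_nonneg hc _)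
      (softThreshold_le_self hc (bubble_pos s y).le) 2
  · rw [← bubble_sq]
    exact (tendsto_softThreshold_nhdsGT_zero (bubble_pos s y).le).pow 2

variable {γ α : ℝ}

lemma integrable_energyMajorant (hs : (Module.finrank ℝ E : ℝ) < 4 * s) (γ α δ : ℝ) :
    Integrable (energyMajorant s γ α δ : E → ℝ) μ :=
  (((integrable_norm_pow_mul_bubble μ (by push_cast; linarith)).const_mul _).add
    ((integrable_norm_pow_mul_bubble μ (by push_cast; linarith)).const_mul _)).const_mul _

lemma integral_energyMajorant (hs : (Module.finrank ℝ E : ℝ) < 4 * s) (γ α δ : ℝ) :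
    ∫ y : E, energyMajorant s γ α δ y ∂μ = δ⁻¹ ^ 2 * (4 * s ^ 2) *
      (γ * radialMoment μ 2 (2 * (s + 1)) + α * δ ^ 2 * radialMoment μ 4 (2 * (s + 1))) := by
  unfold energyMajorant
  rw [integral_const_mul, integral_add, integral_const_mul, integral_const_mul, radialMoment,
    radialMoment]
  all_goals exact (integrable_norm_pow_mul_bubble μ (by push_cast; linarith)).const_mul _

section Weight

variable {w : E → ℝ} (hγ : 0 ≤ γ) (hα : 0 ≤ α) (hδ : 0 < δ)
  (hw : ∀ x ∈ tsupport (truncatedBubble s c δ x₀), |w x| ≤ γ + α * ‖x - x₀‖ ^ 2)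
  (hs : (Module.finrank ℝ E : ℝ) < 4 * s) {Ω : Set E}
  (hmeas : AEStronglyMeasurable w (μ.restrict Ω))
include hγ hα hδ hw hs hmeas

lemma integrableOn_mul_norm_fderiv_truncatedBubble_sq :
    IntegrableOn (fun x => w x * ‖fderiv ℝ (truncatedBubble s c δ x₀) x‖ ^ 2) Ω μ := by
  have hfderiv : Continuous (fderiv ℝ (truncatedBubble s c δ x₀)) :=
    (contDiff_truncatedBubble s c δ x₀).continuous_fderiv (by simp)
  have hmajorant : Integrable (fun x => energyMajorant s γ α δ (δ⁻¹ • (x - x₀))) μ :=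
    ((integrable_energyMajorant μ hs γ α δ).comp_smul (inv_ne_zero hδ.ne')).comp_sub_right x₀
  exact hmajorant.integrableOn.mono' (hmeas.mul (hfderiv.norm.pow 2).aestronglyMeasurable)
    (ae_of_all _ (norm_mul_norm_fderiv_truncatedBubble_sq_le hγ hα hδ hw))

lemma setIntegral_mul_norm_fderiv_truncatedBubble_sq_le :
    ∫ x in Ω, w x * ‖fderiv ℝ (truncatedBubble s c δ x₀) x‖ ^ 2 ∂μ ≤
      δ ^ Module.finrank ℝ E * (δ⁻¹ ^ 2 * (4 * s ^ 2) *
        (γ * radialMoment μ 2 (2 * (s + 1)) + α * δ ^ 2 * radialMoment μ 4 (2 * (s + 1)))) := by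
  have hmajorant : Integrable (fun x => energyMajorant s γ α δ (δ⁻¹ • (x - x₀))) μ :=
    ((integrable_energyMajorant μ hs γ α δ).comp_smul (inv_ne_zero hδ.ne')).comp_sub_right x₀
  calc ∫ x in Ω, w x * ‖fderiv ℝ (truncatedBubble s c δ x₀) x‖ ^ 2 ∂μ
      ≤ ∫ x in Ω, energyMajorant s γ α δ (δ⁻¹ • (x - x₀)) ∂μ :=
        integral_mono (integrableOn_mul_norm_fderiv_truncatedBubble_sq μ hγ hα hδ hw hs hmeas)
          hmajorant.integrableOn fun x => (le_norm_self _).trans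
            (norm_mul_norm_fderiv_truncatedBubble_sq_le hγ hα hδ hw x)
    _ ≤ ∫ x, energyMajorant s γ α δ (δ⁻¹ • (x - x₀)) ∂μ :=
        setIntegral_le_integral hmajorant
          (ae_of_all _ fun x => energyMajorant_nonneg hγ hα s δ _)
    _ = _ := by rw [integral_comp_inv_smul_sub μ _ hδ.le, integral_energyMajorant μ hs]

end Weight

end TruncatedBubbleIntegrals

/-- The Sobolev exponent `q = 2N / (N - 2)`. -/
def sobolevExponent (N : ℕ) : ℝ := 2 * (N : ℝ) / ((N : ℝ) - 2)

/-- The quotient `K₁ / K₂` of the bubble, which is the best Sobolev constant `S`. -/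
def bubbleQuotient {E : Type*} [NormedAddCommGroup E] [MeasurableSpace E] (μ : Measure E) (N : ℕ) :
    ℝ :=
  ((N : ℝ) - 2) ^ 2 * radialMoment μ 2 N / (∫ y, bubble N y ∂μ) ^ (((N : ℝ) - 2) / N)

/-- The integral of the critical power of the bubble truncated at level `c`, which approximates
`radialMoment μ 0 N`. -/
def truncatedMass {E : Type*} [NormedAddCommGroup E] [MeasurableSpace E] (μ : Measure E) (N : ℕ)
    (c : ℝ) : ℝ :=
  ∫ y, |softThreshold c (bubble (((N : ℝ) - 2) / 2) y)| ^ sobolevExponent N ∂μ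

lemma rpow_mul_one_sub_le_rpow {Q T ρ θ : ℝ} (hQ : 0 ≤ Q) (hT : 0 ≤ T) (hρ : 0 ≤ ρ) (hθ : 0 < θ)
    (hθ_one : θ ≤ 1) (h : Q * (1 - ρ) ≤ T) : Q ^ θ * (1 - ρ) ≤ T ^ θ := by
  rcases le_or_gt ρ 1 with hρ_one | hρ_one
  · have hsub : 0 ≤ 1 - ρ := sub_nonneg.2 hρ_one
    calc Q ^ θ * (1 - ρ) ≤ Q ^ θ * (1 - ρ) ^ θ := by
          gcongr
          exact self_le_rpow_of_le_one hsub (sub_le_self 1 hρ) hθ_one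
      _ = (Q * (1 - ρ)) ^ θ := (mul_rpow hQ hsub).symm
      _ ≤ T ^ θ := by gcongr
  · exact (mul_nonpos_of_nonneg_of_nonpos (by positivity) (by linarith)).trans (by positivity)

section CriticalExponent

variable {N : ℕ}

lemma two_lt_sobolevExponent (hN : 3 ≤ N) : 2 < sobolevExponent N := by
  have hN' : (3 : ℝ) ≤ N := by exact_mod_cast hN
  rw [sobolevExponent, lt_div_iff₀ (by linarith)]
  linarith

lemma two_div_sobolevExponent (N : ℕ) : 2 / sobolevExponent N = ((N : ℝ) - 2) / N := by
  rw [sobolevExponent, div_div_eq_mul_div, mul_div_mul_left _ _ two_ne_zero]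

lemma pow_mul_rpow_two_div_sobolevExponent (hN : 3 ≤ N) {δ T : ℝ} (hδ : 0 < δ) (hT : 0 ≤ T) :
    (δ ^ N * T) ^ (2 / sobolevExponent N) = δ ^ N * δ⁻¹ ^ 2 * T ^ (2 / sobolevExponent N) := by
  have hN' : (N : ℝ) ≠ 0 := by exact_mod_cast (by omega : N ≠ 0)
  rw [mul_rpow (by positivity) hT, two_div_sobolevExponent, ← rpow_natCast δ N, ← rpow_mul hδ.le,
    mul_div_cancel₀ _ hN', rpow_sub hδ, rpow_two, inv_pow, div_eq_mul_inv]

variable {E : Type*} [NormedAddCommGroup E] [InnerProductSpace ℝ E] [FiniteDimensional ℝ E]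
  [MeasurableSpace E] [BorelSpace E] (μ : Measure E) [μ.IsAddHaarMeasure]
  (hdim : Module.finrank ℝ E = N)
include hdim

lemma exists_mul_one_sub_le_truncatedMass (hN : 3 ≤ N) :
    ∃ ρ, 0 ≤ ρ ∧ ∀ c, 0 < c → radialMoment μ 0 N * (1 - ρ * c) ≤ truncatedMass μ N c := by
  have hN' : (3 : ℝ) ≤ N := by exact_mod_cast hN
  have hexponent : ((N : ℝ) - 2) / 2 * sobolevExponent N = N := by
    rw [sobolevExponent]
    field_simp [show (N : ℝ) - 2 ≠ 0 by linarith]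
  have hq := two_lt_sobolevExponent hN
  have hmass : 0 < radialMoment μ 0 N := radialMoment_zero_pos μ (by rw [hdim]; linarith)
  refine ⟨2 * sobolevExponent N *
    radialMoment μ 0 (((N : ℝ) - 2) / 2 * (sobolevExponent N - 1)) / radialMoment μ 0 N,
    div_nonneg (mul_nonneg (by linarith) (radialMoment_nonneg μ _ _)) hmass.le, fun c hc => ?_⟩
  have hbound := sub_le_integral_softThreshold_bubble_rpow μ (s := ((N : ℝ) - 2) / 2) hc
    (by linarith : 1 ≤ sobolevExponent N) (by rw [mul_sub, hexponent, hdim]; linarith)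
  rw [hexponent] at hbound
  refine Eq.trans_le ?_ hbound
  field_simp

lemma eventually_truncatedMass_pos (hN : 3 ≤ N) : ∀ᶠ c in 𝓝[>] 0, 0 < truncatedMass μ N c := by
  obtain ⟨ρ, -, hρ⟩ := exists_mul_one_sub_le_truncatedMass μ hdim hN
  have hN' : (3 : ℝ) ≤ N := by exact_mod_cast hN
  have hmass : 0 < radialMoment μ 0 N := radialMoment_zero_pos μ (by rw [hdim]; linarith)
  have hcont : Continuous fun c => radialMoment μ 0 N * (1 - ρ * c) := by fun_prop
  have hlower : ∀ᶠ c in 𝓝[>] 0, 0 < radialMoment μ 0 N * (1 - ρ * c) :=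
    (hcont.tendsto 0).mono_left nhdsWithin_le_nhds |>.eventually_const_lt (by simpa using hmass)
  filter_upwards [hlower, self_mem_nhdsWithin] with c hpos hc using hpos.trans_le (hρ c hc)

lemma exists_mul_one_sub_le_bubbleQuotient_mul (hN : 3 ≤ N) :
    ∃ ρ, ∀ c, 0 < c → ((N : ℝ) - 2) ^ 2 * radialMoment μ 2 N * (1 - ρ * c) ≤
      bubbleQuotient μ N * truncatedMass μ N c ^ (2 / sobolevExponent N) := by
  obtain ⟨ρ, hρ_nonneg, hρ⟩ := exists_mul_one_sub_le_truncatedMass μ hdim hN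
  have hN' : (3 : ℝ) ≤ N := by exact_mod_cast hN
  have hq := two_lt_sobolevExponent hN
  have hmass : 0 < radialMoment μ 0 N := radialMoment_zero_pos μ (by rw [hdim]; linarith)
  refine ⟨ρ, fun c hc => ?_⟩
  have hroot := rpow_mul_one_sub_le_rpow hmass.le (integral_nonneg fun y => by positivity)
    (mul_nonneg hρ_nonneg hc.le) (θ := 2 / sobolevExponent N) (by positivity)
    ((div_le_one (by linarith)).2 hq.le) (hρ c hc)
  have hgradient := radialMoment_nonneg μ 2 N
  rw [bubbleQuotient, ← radialMoment_zero, ← two_div_sobolevExponent, div_mul_eq_mul_div,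
    le_div_iff₀ (by positivity), mul_assoc, mul_comm (1 - ρ * c)]
  gcongr
  exact hroot

-- Truncation costs `O(c)` in the quotient, where `c = O(δ ^ (N - 2)) = o(δ ^ 2)` as `N ≥ 5`.
lemma eventually_truncatedBubble_quotient_lt (hN : 5 ≤ N) {γ κ lam r : ℝ} (hr : 0 < r)
    (hκ : κ < lam * radialMoment μ 0 (N - 2)) (hγ : 0 ≤ γ) :
    ∀ᶠ δ in 𝓝[>] 0, γ * (((N : ℝ) - 2) ^ 2 * radialMoment μ 2 N) + δ ^ 2 * (κ - lam *
        ∫ y, softThreshold (truncationLevel (((N : ℝ) - 2) / 2) r δ)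
          (bubble (((N : ℝ) - 2) / 2) y) ^ 2 ∂μ) <
      γ * (bubbleQuotient μ N * truncatedMass μ N (truncationLevel (((N : ℝ) - 2) / 2) r δ) ^
        (2 / sobolevExponent N)) := by
  obtain ⟨ρ, hρ⟩ := exists_mul_one_sub_le_bubbleQuotient_mul μ hdim (by omega)
  have hN' : (5 : ℝ) ≤ N := by exact_mod_cast hN
  set s := ((N : ℝ) - 2) / 2 with hs_def
  have hs : 1 < s := by linarith
  set K := ((N : ℝ) - 2) ^ 2 * radialMoment μ 2 N
  have hsq := (tendsto_integral_softThreshold_bubble_sq μ (s := s) (by rw [hdim]; linarith)).comp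
    (tendsto_truncationLevel_nhdsGT_zero hr hs)
  rw [hs_def, mul_div_cancel₀ _ two_ne_zero, ← hs_def] at hsq
  have hlimit := ((tendsto_truncationLevel_div_sq hr hs).const_mul (γ * K * ρ)).add
    ((hsq.const_mul lam).const_sub κ)
  filter_upwards [hlimit.eventually_lt_const (u := 0) (by linarith), self_mem_nhdsWithin]
    with δ hneg (hδ : 0 < δ)
  calc γ * K + δ ^ 2 * (κ - lam * ∫ y, softThreshold (truncationLevel s r δ) (bubble s y) ^ 2 ∂μ)
      = γ * (K * (1 - ρ * truncationLevel s r δ)) + δ ^ 2 * (γ * K * ρ *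
          (truncationLevel s r δ / δ ^ 2) + (κ - lam *
            ∫ y, softThreshold (truncationLevel s r δ) (bubble s y) ^ 2 ∂μ)) := by
        field_simp
        ring
    _ < γ * (K * (1 - ρ * truncationLevel s r δ)) :=
        add_lt_of_neg_right _ (mul_neg_of_pos_of_neg (by positivity) hneg)
    _ ≤ _ := mul_le_mul_of_nonneg_left (hρ _ (truncationLevel_pos _ _ _)) hγ

end CriticalExponent

section CoupledEnergy

/-- The admissible functions on `Ω`: smooth with compact support contained in `Ω`. -/
structure IsTestFunctionOn {E : Type*} [NormedAddCommGroup E] [NormedSpace ℝ E] (Ω : Set E)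
    (u : E → ℝ) : Prop where
  contDiff : ContDiff ℝ (⊤ : ℕ∞) u
  hasCompactSupport : HasCompactSupport u
  tsupport_subset : tsupport u ⊆ Ω

/-- The functional `F_λ(u, v)` on `Ω`, with the weights `a` and `b`. -/
def coupledEnergy {E : Type*} [NormedAddCommGroup E] [NormedSpace ℝ E] [MeasurableSpace E]
    (μ : Measure E) (Ω : Set E) (a b : E → ℝ) (lam : ℝ) (u v : E → ℝ) : ℝ :=
  (1 / 2) * (∫ x in Ω, a x * ‖fderiv ℝ u x‖ ^ 2 ∂μ)
    + (1 / 2) * (∫ x in Ω, b x * ‖fderiv ℝ v x‖ ^ 2 ∂μ)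
    - lam * ∫ x in Ω, u x * v x ∂μ

variable {E : Type*} [NormedAddCommGroup E] [NormedSpace ℝ E] {Ω : Set E} {u : E → ℝ}

lemma IsTestFunctionOn.const_smul (hu : IsTestFunctionOn Ω u) (C : ℝ) :
    IsTestFunctionOn Ω (C • u) :=
  ⟨hu.contDiff.const_smul C, hu.hasCompactSupport.smul_left,
    (tsupport_smul_subset_right (fun _ => C) u).trans hu.tsupport_subset⟩

variable [MeasurableSpace E] (μ : Measure E)

lemma coupledEnergy_smul (a b : E → ℝ) (lam C : ℝ) (u v : E → ℝ) :
    coupledEnergy μ Ω a b lam (C • u) (C • v) = C ^ 2 * coupledEnergy μ Ω a b lam u v := by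
  have hgradient (w f : E → ℝ) : ∫ x in Ω, w x * ‖fderiv ℝ (C • f) x‖ ^ 2 ∂μ =
      C ^ 2 * ∫ x in Ω, w x * ‖fderiv ℝ f x‖ ^ 2 ∂μ := by
    simp only [fderiv_const_smul_field, Pi.smul_apply, norm_smul, norm_eq_abs, mul_pow, sq_abs,
      mul_left_comm _ (C ^ 2), integral_const_mul]
  have hcoupling : ∫ x in Ω, (C • u) x * (C • v) x ∂μ = C ^ 2 * ∫ x in Ω, u x * v x ∂μ := by
    simp only [Pi.smul_apply, smul_eq_mul, mul_mul_mul_comm, ← sq, integral_const_mul]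
  rw [coupledEnergy, hgradient, hgradient, hcoupling, coupledEnergy]
  ring

lemma exists_normalized_coupledEnergy_lt {a b : E → ℝ} {lam q Γ : ℝ} (hq : 0 < q)
    (hu : IsTestFunctionOn Ω u) (hmass : 0 < ∫ x in Ω, |u x| ^ q ∂μ)
    (hlt : coupledEnergy μ Ω a b lam u u < Γ * (∫ x in Ω, |u x| ^ q ∂μ) ^ (2 / q)) :
    ∃ v, IsTestFunctionOn Ω v ∧ (∫ x in Ω, |v x| ^ q ∂μ) ^ (1 / q) = 1 ∧
      coupledEnergy μ Ω a b lam v v < Γ := by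
  set T := ∫ x in Ω, |u x| ^ q ∂μ with hT
  have hscale : 0 < T ^ (-(1 / q)) := by positivity
  refine ⟨T ^ (-(1 / q)) • u, hu.const_smul _, ?_, ?_⟩
  · simp only [Pi.smul_apply, smul_eq_mul, abs_mul, abs_of_pos hscale,
      mul_rpow hscale.le (abs_nonneg _), integral_const_mul]
    rw [← hT, ← rpow_mul hmass.le, neg_mul, one_div_mul_cancel hq.ne', rpow_neg_one,
      inv_mul_cancel₀ hmass.ne', one_rpow]
  · have hsq : (T ^ (-(1 / q))) ^ 2 = (T ^ (2 / q))⁻¹ := by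
      rw [← rpow_two, ← rpow_mul hmass.le, ← rpow_neg hmass.le]
      ring_nf
    rw [coupledEnergy_smul, hsq, inv_mul_lt_iff₀ (by positivity), mul_comm]
    exact hlt

end CoupledEnergy

section TruncatedBubbleEnergy

variable {N : ℕ} {E : Type*} [NormedAddCommGroup E] [InnerProductSpace ℝ E] [FiniteDimensional ℝ E]
  {Ω : Set E}

lemma isTestFunctionOn_truncatedBubble {s r δ : ℝ} {x₀ : E} (hs : 0 ≤ s) (hr : 0 ≤ r)
    (hδ : 0 < δ) (hball : Metric.closedBall x₀ r ⊆ Ω) :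
    IsTestFunctionOn Ω (truncatedBubble s (truncationLevel s r δ) δ x₀) :=
  have hsupport := tsupport_truncatedBubble_subset_closedBall hs hr hδ
  ⟨contDiff_truncatedBubble _ _ _ _,
    (isCompact_closedBall x₀ r).of_isClosed_subset (isClosed_tsupport _) hsupport,
    hsupport.trans hball⟩

variable [MeasurableSpace E] [BorelSpace E] (μ : Measure E) [μ.IsAddHaarMeasure]

lemma coupledEnergy_truncatedBubble_le (hdim : Module.finrank ℝ E = N) (hN : 5 ≤ N)
    {a b : E → ℝ} {γ α β lam c δ : ℝ} {x₀ : E} (hγ : 0 ≤ γ) (hα : 0 ≤ α) (hβ : 0 ≤ β) (hδ : 0 < δ)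
    (ha : ∀ x ∈ tsupport (truncatedBubble (((N : ℝ) - 2) / 2) c δ x₀), |a x| ≤ γ + α * ‖x - x₀‖ ^ 2)
    (hb : ∀ x ∈ tsupport (truncatedBubble (((N : ℝ) - 2) / 2) c δ x₀), |b x| ≤ γ + β * ‖x - x₀‖ ^ 2)
    (hΩ : tsupport (truncatedBubble (((N : ℝ) - 2) / 2) c δ x₀) ⊆ Ω)
    (ha_meas : AEStronglyMeasurable a (μ.restrict Ω))
    (hb_meas : AEStronglyMeasurable b (μ.restrict Ω)) :
    coupledEnergy μ Ω a b lam (truncatedBubble (((N : ℝ) - 2) / 2) c δ x₀)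
        (truncatedBubble (((N : ℝ) - 2) / 2) c δ x₀) ≤
      δ ^ N * δ⁻¹ ^ 2 * (γ * (((N : ℝ) - 2) ^ 2 * radialMoment μ 2 N) +
        δ ^ 2 * ((α + β) / 2 * (((N : ℝ) - 2) ^ 2 * radialMoment μ 4 N) -
          lam * ∫ y, softThreshold c (bubble (((N : ℝ) - 2) / 2) y) ^ 2 ∂μ)) := by
  have hN' : (5 : ℝ) ≤ N := by exact_mod_cast hN
  set s := ((N : ℝ) - 2) / 2 with hs_def
  have hs : (Module.finrank ℝ E : ℝ) < 4 * s := by rw [hdim]; linarith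
  have hexponent : 2 * (s + 1) = N := by rw [hs_def]; ring
  have hconst : 4 * s ^ 2 = ((N : ℝ) - 2) ^ 2 := by rw [hs_def]; ring
  have hgradient_a := setIntegral_mul_norm_fderiv_truncatedBubble_sq_le μ hγ hα hδ ha hs ha_meas
  have hgradient_b := setIntegral_mul_norm_fderiv_truncatedBubble_sq_le μ hγ hβ hδ hb hs hb_meas
  have hcoupling := setIntegral_comp_truncatedBubble μ (g := (· ^ 2)) (zero_pow two_ne_zero)
    hδ.le hΩ
  simp only [hdim, hexponent, hconst] at hgradient_a hgradient_b hcoupling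
  simp only [coupledEnergy, ← sq, hcoupling]
  refine (sub_le_sub_right (add_le_add (mul_le_mul_of_nonneg_left hgradient_a one_half_pos.le)
    (mul_le_mul_of_nonneg_left hgradient_b one_half_pos.le)) _).trans_eq ?_
  field_simp
  ring

lemma setIntegral_truncatedBubble_rpow (hdim : Module.finrank ℝ E = N) (hN : 3 ≤ N) {c δ : ℝ}
    {x₀ : E} (hδ : 0 ≤ δ) (hΩ : tsupport (truncatedBubble (((N : ℝ) - 2) / 2) c δ x₀) ⊆ Ω) :
    ∫ x in Ω, |truncatedBubble (((N : ℝ) - 2) / 2) c δ x₀ x| ^ sobolevExponent N ∂μ =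
      δ ^ N * truncatedMass μ N c := by
  have hq : sobolevExponent N ≠ 0 := by linarith [two_lt_sobolevExponent hN]
  have hscaling := setIntegral_comp_truncatedBubble μ (g := fun t => |t| ^ sobolevExponent N)
    (by simp only [abs_zero, zero_rpow hq]) hδ hΩ
  rwa [hdim] at hscaling

lemma exists_isTestFunctionOn_of_le_on_closedBall (hdim : Module.finrank ℝ E = N) (hN : 5 ≤ N)
    {a b : E → ℝ} {γ α β lam r : ℝ} {x₀ : E} (hr : 0 < r) (hball : Metric.closedBall x₀ r ⊆ Ω)
    (hγ : 0 ≤ γ) (hα : 0 ≤ α) (hβ : 0 ≤ β)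
    (ha : ∀ x ∈ Metric.closedBall x₀ r, |a x| ≤ γ + α * ‖x - x₀‖ ^ 2)
    (hb : ∀ x ∈ Metric.closedBall x₀ r, |b x| ≤ γ + β * ‖x - x₀‖ ^ 2)
    (ha_meas : AEStronglyMeasurable a (μ.restrict Ω))
    (hb_meas : AEStronglyMeasurable b (μ.restrict Ω))
    (hlam : (α + β) / 2 * (((N : ℝ) - 2) ^ 2 * radialMoment μ 4 N) <
      lam * radialMoment μ 0 (N - 2)) :
    ∃ u, IsTestFunctionOn Ω u ∧ (∫ x in Ω, |u x| ^ sobolevExponent N ∂μ) ^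
      (1 / sobolevExponent N) = 1 ∧ coupledEnergy μ Ω a b lam u u < γ * bubbleQuotient μ N := by
  have hN' : (5 : ℝ) ≤ N := by exact_mod_cast hN
  have hs : 1 < ((N : ℝ) - 2) / 2 := by linarith
  have hmass := (tendsto_truncationLevel_nhdsGT_zero hr hs).eventually
    (eventually_truncatedMass_pos μ hdim (by omega))
  obtain ⟨δ, (hδ : 0 < δ), hmass, hlt⟩ := (eventually_mem_nhdsWithin.and (hmass.and
    (eventually_truncatedBubble_quotient_lt μ hdim hN hr hlam hγ))).exists
  have hsupport := tsupport_truncatedBubble_subset_closedBall (x₀ := x₀)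
    (zero_lt_one.trans hs).le hr.le hδ
  have hpower := setIntegral_truncatedBubble_rpow μ hdim (by omega) hδ.le (hsupport.trans hball)
  have hq : 0 < sobolevExponent N := two_pos.trans (two_lt_sobolevExponent (by omega))
  refine exists_normalized_coupledEnergy_lt μ hq
    (isTestFunctionOn_truncatedBubble (zero_lt_one.trans hs).le hr.le hδ hball)
    (by rw [hpower]; positivity) ?_
  rw [hpower, pow_mul_rpow_two_div_sobolevExponent (by omega) hδ hmass.le]
  refine (coupledEnergy_truncatedBubble_le μ hdim hN hγ hα hβ hδ (fun x hx => ha x (hsupport hx))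
    (fun x hx => hb x (hsupport hx)) (hsupport.trans hball) ha_meas hb_meas).trans_lt ?_
  refine (mul_lt_mul_of_pos_left hlt (by positivity)).trans_eq ?_
  ring

lemma threshold_mul_radialMoment_zero (hdim : Module.finrank ℝ E = N) (hN : 5 ≤ N) :
    (N : ℝ) * ((N : ℝ) - 2) * ((N : ℝ) + 2) / (8 * ((N : ℝ) - 1)) * radialMoment μ 0 (N - 2) =
      ((N : ℝ) - 2) ^ 2 * radialMoment μ 4 N / 2 := by
  have hN' : (5 : ℝ) ≤ N := by exact_mod_cast hN
  rw [div_mul_eq_mul_div, div_eq_iff (by linarith)]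
  linear_combination ((N : ℝ) - 2) * radialMoment_zero_eq_radialMoment_four μ hdim hN

lemma eventually_add_mul_radialMoment_lt (hdim : Module.finrank ℝ E = N) (hN : 5 ≤ N)
    {A B lam : ℝ}
    (hlam : (N : ℝ) * ((N : ℝ) - 2) * ((N : ℝ) + 2) / (8 * ((N : ℝ) - 1)) * (A + B) < lam) :
    ∀ᶠ ε in 𝓝[>] 0, (A + ε + (B + ε)) / 2 * (((N : ℝ) - 2) ^ 2 * radialMoment μ 4 N) <
      lam * radialMoment μ 0 (N - 2) := by
  have hN' : (5 : ℝ) ≤ N := by exact_mod_cast hN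
  have hpos : 0 < radialMoment μ 0 (N - 2) := radialMoment_zero_pos μ (by rw [hdim]; linarith)
  have hcont : Continuous fun ε : ℝ =>
    (A + ε + (B + ε)) / 2 * (((N : ℝ) - 2) ^ 2 * radialMoment μ 4 N) := by fun_prop
  refine ((hcont.tendsto 0).mono_left nhdsWithin_le_nhds).eventually_lt_const ?_
  calc (A + 0 + (B + 0)) / 2 * (((N : ℝ) - 2) ^ 2 * radialMoment μ 4 N)
      = (N : ℝ) * ((N : ℝ) - 2) * ((N : ℝ) + 2) / (8 * ((N : ℝ) - 1)) * (A + B) *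
          radialMoment μ 0 (N - 2) := by
        linear_combination -(A + B) * threshold_mul_radialMoment_zero μ hdim hN
    _ < lam * radialMoment μ 0 (N - 2) := mul_lt_mul_of_pos_right hlam hpos

end TruncatedBubbleEnergy

section Expansion

variable {E : Type*} [NormedAddCommGroup E] {f : E → ℝ} {x₀ : E} {A γ : ℝ}

lemma isLittleO_of_tendsto_expansion {k : ℝ} (hk : k ≠ 0)
    (h : Tendsto (fun x => (f x - f x₀ - A * ‖x - x₀‖ ^ k) / ‖x - x₀‖ ^ k) (𝓝[≠] x₀) (𝓝 0)) :
    (fun x => f x - f x₀ - A * ‖x - x₀‖ ^ k) =o[𝓝 x₀] fun x => ‖x - x₀‖ ^ k := by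
  refine (Asymptotics.isLittleO_iff_tendsto fun x hx => ?_).2 ?_
  · rw [rpow_eq_zero (norm_nonneg _) hk, norm_eq_zero, sub_eq_zero] at hx
    simp only [hx, sub_self, norm_zero, zero_rpow hk, mul_zero]
  · have hcont := continuousAt_iff_punctured_nhds.2 (h.trans (by simp [zero_rpow hk]))
    simpa [ContinuousAt, zero_rpow hk] using hcont

lemma isLittleO_sq_of_tendsto_expansion {l : ℝ} (hl : 2 < l)
    (h : Tendsto (fun x => (f x - f x₀ - A * ‖x - x₀‖ ^ l) / ‖x - x₀‖ ^ l) (𝓝[≠] x₀) (𝓝 0)) :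
    (fun x => f x - f x₀) =o[𝓝 x₀] fun x => ‖x - x₀‖ ^ 2 := by
  have hcont : Continuous fun x : E => ‖x - x₀‖ ^ (l - 2) :=
    (continuous_rpow_const (by linarith)).comp (by fun_prop)
  have hzero : Tendsto (fun x : E => ‖x - x₀‖ ^ (l - 2)) (𝓝 x₀) (𝓝 0) :=
    hcont.tendsto' x₀ 0 (by rw [sub_self, norm_zero, zero_rpow (by linarith)])
  have hpow : (fun x : E => ‖x - x₀‖ ^ l) =o[𝓝 x₀] fun x => ‖x - x₀‖ ^ 2 := by
    refine (((Asymptotics.isLittleO_one_iff ℝ).2 hzero).mul_isBigO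
      (Asymptotics.isBigO_refl (fun x : E => ‖x - x₀‖ ^ 2) _)).congr (fun x => ?_)
        fun x => one_mul _
    rw [← rpow_two, ← rpow_add_of_nonneg (norm_nonneg _) (by linarith) two_pos.le, sub_add_cancel]
  exact (((isLittleO_of_tendsto_expansion (by linarith) h).trans hpow).add
    (hpow.const_mul_left A)).congr_left fun x => sub_add_cancel _ _

lemma eventually_abs_le_of_isLittleO
    (h : (fun x => f x - γ - A * ‖x - x₀‖ ^ 2) =o[𝓝 x₀] fun x => ‖x - x₀‖ ^ 2)
    (hγ : 0 ≤ γ) (hA : 0 ≤ A) {ε : ℝ} (hε : 0 < ε) :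
    ∀ᶠ x in 𝓝 x₀, |f x| ≤ γ + (A + ε) * ‖x - x₀‖ ^ 2 := by
  filter_upwards [h.bound hε] with x hx
  rw [norm_eq_abs, norm_of_nonneg (by positivity)] at hx
  have hquad : 0 ≤ A * ‖x - x₀‖ ^ 2 := by positivity
  have := abs_le.1 hx
  rw [abs_le]
  constructor <;> linarith

end Expansion

theorem stmt_5_general {N : ℕ} {E : Type*} [NormedAddCommGroup E] [InnerProductSpace ℝ E]
    [FiniteDimensional ℝ E] [MeasurableSpace E] [BorelSpace E] (μ : Measure E)
    [μ.IsAddHaarMeasure] (hdim : Module.finrank ℝ E = N) (hN : 5 ≤ N)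
    {Ω : Set E} (hΩ : IsOpen Ω) {x₀ : E} (hx₀ : x₀ ∈ Ω) {a b : E → ℝ} (ha : ContinuousOn a Ω)
    (hb : ContinuousOn b Ω) {γ A B lam : ℝ} (hγ : 0 ≤ γ) (hA : 0 ≤ A) (hB : 0 ≤ B)
    (hexpa : (fun x => a x - γ - A * ‖x - x₀‖ ^ 2) =o[𝓝 x₀] fun x => ‖x - x₀‖ ^ 2)
    (hexpb : (fun x => b x - γ - B * ‖x - x₀‖ ^ 2) =o[𝓝 x₀] fun x => ‖x - x₀‖ ^ 2)
    (hlam : (N : ℝ) * ((N : ℝ) - 2) * ((N : ℝ) + 2) / (8 * ((N : ℝ) - 1)) * (A + B) < lam) :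
    ∃ u, IsTestFunctionOn Ω u ∧ (∫ x in Ω, |u x| ^ sobolevExponent N ∂μ) ^
      (1 / sobolevExponent N) = 1 ∧ coupledEnergy μ Ω a b lam u u < γ * bubbleQuotient μ N := by
  obtain ⟨ε, hlam', hε : 0 < ε⟩ :=
    ((eventually_add_mul_radialMoment_lt μ hdim hN hlam).and self_mem_nhdsWithin).exists
  have hnear := (hΩ.eventually_mem hx₀).and ((eventually_abs_le_of_isLittleO hexpa hγ hA hε).and
    (eventually_abs_le_of_isLittleO hexpb hγ hB hε))
  obtain ⟨r, hr, hball⟩ := Metric.nhds_basis_closedBall.eventually_iff.1 hnear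
  exact exists_isTestFunctionOn_of_le_on_closedBall μ hdim hN hr (fun x hx => (hball hx).1) hγ
    (by positivity) (by positivity) (fun x hx => (hball hx).2.1) (fun x hx => (hball hx).2.2)
    (ha.aestronglyMeasurable hΩ.measurableSet) (hb.aestronglyMeasurable hΩ.measurableSet) hlam'

theorem stmt_5
    (N : ℕ) (hN : 5 ≤ N)
    (Ω : Set (EuclideanSpace ℝ (Fin N)))
    (hΩo : IsOpen Ω) (hΩb : Bornology.IsBounded Ω) (hΩne : Ω.Nonempty)
    (x₀ : EuclideanSpace ℝ (Fin N)) (hx₀ : x₀ ∈ Ω)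
    (a b : EuclideanSpace ℝ (Fin N) → ℝ)
    (ha : Continuous a) (hb : Continuous b)
    (hapos : ∀ x ∈ closure Ω, 0 < a x) (hbpos : ∀ x ∈ closure Ω, 0 < b x)
    (γ₀ : ℝ) (haγ : a x₀ = γ₀) (hbγ : b x₀ = γ₀)
    (hamin : ∀ x ∈ closure Ω, γ₀ ≤ a x) (hbmin : ∀ x ∈ closure Ω, γ₀ ≤ b x)
    (k l A B : ℝ) (hA : 0 < A) (hB : 0 < B)
    (hk : k = 2) (hl : 2 < l)
    (hexpa : Tendsto (fun x => (a x - a x₀ - A * ‖x - x₀‖ ^ k) / ‖x - x₀‖ ^ k)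
      (𝓝[≠] x₀) (𝓝 0))
    (hexpb : Tendsto (fun x => (b x - b x₀ - B * ‖x - x₀‖ ^ l) / ‖x - x₀‖ ^ l)
      (𝓝[≠] x₀) (𝓝 0))
    (q : ℝ) (hq : q = 2 * (N : ℝ) / ((N : ℝ) - 2))
    (K₁ K₂ S : ℝ)
    (hK₁ : K₁ = ((N : ℝ) - 2) ^ 2 *
      ∫ y : EuclideanSpace ℝ (Fin N), ‖y‖ ^ 2 * (1 + ‖y‖ ^ 2) ^ (-(N : ℝ)))
    (hK₂ : K₂ = (∫ y : EuclideanSpace ℝ (Fin N), (1 + ‖y‖ ^ 2) ^ (-(N : ℝ)))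
      ^ (((N : ℝ) - 2) / (N : ℝ)))
    (hS : S = K₁ / K₂)
    (lam : ℝ) (hlam : (N : ℝ) * ((N : ℝ) - 2) * ((N : ℝ) + 2) / (8 * ((N : ℝ) - 1)) * A < lam) :
    ∃ u v : EuclideanSpace ℝ (Fin N) → ℝ,
      ContDiff ℝ (⊤ : ℕ∞) u ∧ HasCompactSupport u ∧ tsupport u ⊆ Ω ∧
      ContDiff ℝ (⊤ : ℕ∞) v ∧ HasCompactSupport v ∧ tsupport v ⊆ Ω ∧
      (∫ x in Ω, |u x| ^ q) ^ (1 / q) = 1 ∧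
      (∫ x in Ω, |v x| ^ q) ^ (1 / q) = 1 ∧
      (1 / 2) * (∫ x in Ω, a x * ‖fderiv ℝ u x‖ ^ 2)
        + (1 / 2) * (∫ x in Ω, b x * ‖fderiv ℝ v x‖ ^ 2)
        - lam * ∫ x in Ω, u x * v x
      < γ₀ * S := by
  subst haγ hk hq hS hK₁ hK₂
  have hexpa' := isLittleO_of_tendsto_expansion two_ne_zero hexpa
  have hexpb' := isLittleO_sq_of_tendsto_expansion hl hexpb
  simp only [rpow_two] at hexpa'
  obtain ⟨u, hu, hnorm, hlt⟩ := stmt_5_general (B := 0) volume finrank_euclideanSpace_fin hN hΩo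
    hx₀ ha.continuousOn hb.continuousOn (hapos x₀ (subset_closure hx₀)).le hA.le le_rfl hexpa'
    (by simpa only [hbγ, zero_mul, sub_zero] using hexpb') (by rwa [add_zero])
  exact ⟨u, u, hu.contDiff, hu.hasCompactSupport, hu.tsupport_subset, hu.contDiff,
    hu.hasCompactSupport, hu.tsupport_subset, hnorm, hnorm, hlt⟩
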